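/- arXiv:math/9802035 — 2 statements merged into one kernel-verified Lean document; each statement's English description precedes it below -/
import Mathlib

section
/- For every nonzero p ∈ ℝ³, ∫_{ℝ³} |p − p'|⁻² |p'|^{−3/2} dp' = 4π² |p|^{−1/2}. -/
open MeasureTheory

/-!
Feynman's parametrization turns the product of the two kernels into a superposition, over
`x ∈ (0, 1)`, of powers of `x ‖p - q‖² + (1 - x) ‖q‖² = ‖q - x p‖² + x (1 - x) ‖p‖²`. For fixed `x`
the integral over `q` is thus translation invariant, so it is a constant times a power of
`x (1 - x) ‖p‖²`, and what remains is a Beta integral in `x`. Everything is nonnegative, so working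
with Lebesgue integrals makes the exchange of integrals free of integrability conditions.
-/

open Set Real Module ProbabilityTheory

theorem lintegral_ofReal_eq_of_integral_eq {X : Type*} [MeasurableSpace X] {μ : Measure X}
    {f : X → ℝ} {c : ℝ} (hf : 0 ≤ᵐ[μ] f) (hc : c ≠ 0) (h : ∫ x, f x ∂μ = c) :
    ∫⁻ x, ENNReal.ofReal (f x) ∂μ = ENNReal.ofReal c := by
  rw [← h, ofReal_integral_eq_lintegral_ofReal (.of_integral_ne_zero (h ▸ hc)) hf]

section EulerIntegrals

variable {a b : ℝ}

theorem lintegral_rpow_mul_exp_neg_mul_Ioi (ha : 0 < a) {r : ℝ} (hr : 0 < r) :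
    ∫⁻ t in Ioi (0 : ℝ), ENNReal.ofReal (t ^ (a - 1) * exp (-(r * t))) =
      ENNReal.ofReal (Gamma a * r ^ (-a)) := by
  have := Gamma_pos_of_pos ha
  refine lintegral_ofReal_eq_of_integral_eq ?_ (by positivity) ?_
  · exact ae_restrict_of_forall_mem measurableSet_Ioi fun t (ht : 0 < t) => by positivity
  · rw [integral_rpow_mul_exp_neg_mul_Ioi ha hr, one_div, inv_rpow hr.le, rpow_neg hr.le, mul_comm]

theorem lintegral_rpow_mul_one_sub_rpow (ha : 0 < a) (hb : 0 < b) :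
    ∫⁻ x in Ioo (0 : ℝ) 1, ENNReal.ofReal (x ^ (a - 1) * (1 - x) ^ (b - 1)) =
      ENNReal.ofReal (beta a b) := by
  have hβ := beta_pos ha hb
  have h := lintegral_betaPDF_eq_one ha hb
  simp only [lintegral_betaPDF, mul_assoc, ENNReal.ofReal_mul (one_div_pos.mpr hβ).le] at h
  rw [lintegral_const_mul' _ _ ENNReal.ofReal_ne_top, one_div, ENNReal.ofReal_inv_of_pos hβ] at h
  simpa only [inv_inv] using ENNReal.eq_inv_of_mul_eq_one_left ((mul_comm _ _).trans h)

end EulerIntegrals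

section FeynmanParametrization

variable {a b A B : ℝ}

theorem mul_add_one_sub_mul_pos (hA : 0 < A) (hB : 0 < B) {x : ℝ} (hx : x ∈ Icc (0 : ℝ) 1) :
    0 < x * A + (1 - x) * B :=
  convex_Ioi (0 : ℝ) hA hB hx.1 (sub_nonneg.mpr hx.2) (add_sub_cancel x 1)

/-- The projective change of variable `x ↦ x A / (x A + (1 - x) B)` of the unit interval, which
normalizes the linear form `x A + (1 - x) B` in Feynman's parametrization. -/
noncomputable def feynmanMap (A B x : ℝ) : ℝ :=
  x * A / (x * A + (1 - x) * B)

theorem one_sub_feynmanMap {x : ℝ} (h : x * A + (1 - x) * B ≠ 0) :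
    1 - feynmanMap A B x = (1 - x) * B / (x * A + (1 - x) * B) := by
  rw [feynmanMap, one_sub_div h, add_sub_cancel_left]

theorem hasDerivAt_feynmanMap {x : ℝ} (h : x * A + (1 - x) * B ≠ 0) :
    HasDerivAt (feynmanMap A B) (A * B / (x * A + (1 - x) * B) ^ 2) x := by
  have hnum : HasDerivAt (fun y : ℝ => y * A) A x := hasDerivAt_mul_const A
  have hden : HasDerivAt (fun y : ℝ => y * A + (1 - y) * B) (A + -1 * B) x :=
    hnum.add (((hasDerivAt_id x).const_sub 1).mul_const B)
  exact (hnum.div hden h).congr_deriv (by ring)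

theorem feynmanMap_mem_Ioo (hA : 0 < A) (hB : 0 < B) {x : ℝ} (hx : x ∈ Ioo (0 : ℝ) 1) :
    feynmanMap A B x ∈ Ioo (0 : ℝ) 1 := by
  have hD := mul_add_one_sub_mul_pos hA hB (Ioo_subset_Icc_self hx)
  refine ⟨div_pos (mul_pos hx.1 hA) hD, sub_pos.mp ?_⟩
  rw [one_sub_feynmanMap hD.ne']
  exact div_pos (mul_pos (sub_pos.mpr hx.2) hB) hD

theorem feynmanMap_feynmanMap_swap (hA : 0 < A) (hB : 0 < B) {x : ℝ} (hx : x ∈ Ioo (0 : ℝ) 1) :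
    feynmanMap A B (feynmanMap B A x) = x := by
  have hD := (mul_add_one_sub_mul_pos hB hA (Ioo_subset_Icc_self hx)).ne'
  have hden : feynmanMap B A x * A + (1 - feynmanMap B A x) * B =
      A * B / (x * B + (1 - x) * A) := by
    rw [one_sub_feynmanMap hD, feynmanMap]
    ring
  rw [feynmanMap, hden, feynmanMap]
  field_simp

theorem bijOn_feynmanMap (hA : 0 < A) (hB : 0 < B) :
    BijOn (feynmanMap A B) (Ioo 0 1) (Ioo 0 1) :=
  InvOn.bijOn (f' := feynmanMap B A)
    ⟨fun _ => feynmanMap_feynmanMap_swap hB hA, fun _ => feynmanMap_feynmanMap_swap hA hB⟩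
    (fun _ => feynmanMap_mem_Ioo hA hB) (fun _ => feynmanMap_mem_Ioo hB hA)

theorem abs_deriv_mul_feynmanMap_rpow_mul (hA : 0 < A) (hB : 0 < B) {x : ℝ}
    (hx : x ∈ Ioo (0 : ℝ) 1) :
    |A * B / (x * A + (1 - x) * B) ^ 2| *
        (feynmanMap A B x ^ (a - 1) * (1 - feynmanMap A B x) ^ (b - 1)) =
      A ^ a * B ^ b *
        (x ^ (a - 1) * (1 - x) ^ (b - 1) * (x * A + (1 - x) * B) ^ (-(a + b))) := by
  have hx0 : 0 < x := hx.1
  have hx1 : 0 < 1 - x := sub_pos.mpr hx.2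
  have hD := mul_add_one_sub_mul_pos hA hB (Ioo_subset_Icc_self hx)
  rw [one_sub_feynmanMap hD.ne', feynmanMap, abs_of_pos (by positivity)]
  generalize x * A + (1 - x) * B = D at hD
  rw [div_rpow (by positivity) hD.le, div_rpow (by positivity) hD.le, mul_rpow hx0.le hA.le,
    mul_rpow hx1.le hB.le, rpow_sub_one hA.ne', rpow_sub_one hB.ne', rpow_sub_one hD.ne' a,
    rpow_sub_one hD.ne' b, rpow_neg hD.le, rpow_add hD]
  field_simp

theorem lintegral_feynman_parametrization (ha : 0 < a) (hb : 0 < b) (hA : 0 < A) (hB : 0 < B) :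
    ∫⁻ x in Ioo (0 : ℝ) 1, ENNReal.ofReal
        (x ^ (a - 1) * (1 - x) ^ (b - 1) * (x * A + (1 - x) * B) ^ (-(a + b))) =
      ENNReal.ofReal (beta a b * (A ^ (-a) * B ^ (-b))) := by
  have hAB : 0 < A ^ a * B ^ b := by positivity
  have hsubst : ENNReal.ofReal (beta a b) = ENNReal.ofReal (A ^ a * B ^ b) *
      ∫⁻ x in Ioo (0 : ℝ) 1, ENNReal.ofReal
        (x ^ (a - 1) * (1 - x) ^ (b - 1) * (x * A + (1 - x) * B) ^ (-(a + b))) := by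
    have hbij := bijOn_feynmanMap hA hB
    have hderiv (x : ℝ) (hx : x ∈ Ioo (0 : ℝ) 1) := (hasDerivAt_feynmanMap
      (mul_add_one_sub_mul_pos hA hB (Ioo_subset_Icc_self hx)).ne').hasDerivWithinAt
        (s := Ioo (0 : ℝ) 1)
    rw [← lintegral_rpow_mul_one_sub_rpow ha hb, ← hbij.image_eq,
      lintegral_image_eq_lintegral_abs_deriv_mul measurableSet_Ioo hderiv hbij.injOn,
      hbij.image_eq, ← lintegral_const_mul' _ _ ENNReal.ofReal_ne_top]
    refine setLIntegral_congr_fun measurableSet_Ioo fun x hx => ?_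
    rw [← ENNReal.ofReal_mul (abs_nonneg _), ← ENNReal.ofReal_mul hAB.le,
      abs_deriv_mul_feynmanMap_rpow_mul hA hB hx]
  rw [rpow_neg hA.le, rpow_neg hB.le, ← mul_inv, ← div_eq_mul_inv, ENNReal.ofReal_div_of_pos hAB,
    hsubst, mul_comm, ENNReal.mul_div_cancel_right (ENNReal.ofReal_pos.mpr hAB).ne'
      ENNReal.ofReal_ne_top]

end FeynmanParametrization

theorem mul_sq_norm_sub_add_one_sub_mul_sq_norm {V : Type*} [SeminormedAddCommGroup V]
    [InnerProductSpace ℝ V] (p q : V) (x : ℝ) :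
    x * ‖p - q‖ ^ 2 + (1 - x) * ‖q‖ ^ 2 = ‖q - x • p‖ ^ 2 + x * (1 - x) * ‖p‖ ^ 2 := by
  rw [norm_sub_sq_real, norm_sub_sq_real, norm_smul, inner_smul_right, real_inner_comm, mul_pow,
    norm_eq_abs, sq_abs]
  ring

/-- The constant in the composition formula for the Riesz kernels `‖·‖ ^ (-α)` and `‖·‖ ^ (-β)` in
dimension `d`: for `α, β < d < α + β` their convolution is this multiple of
`‖·‖ ^ (d - α - β)`. -/
noncomputable def rieszCompositionConst (d α β : ℝ) : ℝ :=
  π ^ (d / 2) * (Gamma ((d - α) / 2) * Gamma ((d - β) / 2) * Gamma ((α + β - d) / 2)) /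
    (Gamma (α / 2) * Gamma (β / 2) * Gamma (d - (α + β) / 2))

theorem rieszCompositionConst_nonneg {d α β : ℝ} (hα : α < d) (hβ : β < d) (hαβ : d < α + β) :
    0 ≤ rieszCompositionConst d α β := by
  have hΓ {s : ℝ} (hs : 0 < s) : 0 ≤ Gamma s := (Gamma_pos_of_pos hs).le
  unfold rieszCompositionConst
  have := hΓ (s := (d - α) / 2) (by linarith)
  have := hΓ (s := (d - β) / 2) (by linarith)
  have := hΓ (s := (α + β - d) / 2) (by linarith)
  have := hΓ (s := α / 2) (by linarith)
  have := hΓ (s := β / 2) (by linarith)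
  have := hΓ (s := d - (α + β) / 2) (by linarith)
  positivity

theorem rieszCompositionConst_eq_beta {d α β : ℝ} (hαβ : 0 < α + β) :
    rieszCompositionConst d α β =
      π ^ (d / 2) * (Gamma (α / 2 + β / 2 - d / 2) / Gamma (α / 2 + β / 2)) *
        beta (d / 2 - β / 2) (d / 2 - α / 2) / beta (α / 2) (β / 2) := by
  have : Gamma (α / 2 + β / 2) ≠ 0 := (Gamma_pos_of_pos (by linarith)).ne'
  rw [rieszCompositionConst, beta, beta, show (d - α) / 2 = d / 2 - α / 2 by ring,
    show (d - β) / 2 = d / 2 - β / 2 by ring,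
    show (α + β - d) / 2 = α / 2 + β / 2 - d / 2 by ring,
    show d / 2 - β / 2 + (d / 2 - α / 2) = d - (α + β) / 2 by ring]
  field_simp

theorem rieszCompositionConst_three_two_three_halves :
    rieszCompositionConst 3 2 (3 / 2) = 4 * π ^ 2 := by
  have hΓ₁ : Gamma (1 / 4) ≠ 0 := (Gamma_pos_of_pos (by norm_num)).ne'
  have hΓ₃ : Gamma (3 / 4) ≠ 0 := (Gamma_pos_of_pos (by norm_num)).ne'
  have hΓ₅ : Gamma (5 / 4) = 1 / 4 * Gamma (1 / 4) := by
    rw [← Gamma_add_one (by norm_num)]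
    norm_num
  have hπ : π ^ (3 / 2 : ℝ) * √π = π ^ 2 := by
    rw [sqrt_eq_rpow, ← rpow_add pi_pos, ← rpow_natCast]
    norm_num
  rw [rieszCompositionConst, ← hπ]
  norm_num [hΓ₅, Gamma_one_half_eq, -one_div]
  field_simp

section RieszComposition

variable {V : Type*} [NormedAddCommGroup V] [InnerProductSpace ℝ V] [FiniteDimensional ℝ V]
  [MeasurableSpace V] [BorelSpace V]

theorem lintegral_exp_neg_mul_sq_norm {t : ℝ} (ht : 0 < t) :
    ∫⁻ q : V, ENNReal.ofReal (exp (-t * ‖q‖ ^ 2)) =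
      ENNReal.ofReal ((π / t) ^ (finrank ℝ V / 2 : ℝ)) :=
  lintegral_ofReal_eq_of_integral_eq (ae_of_all _ fun _ => exp_nonneg _) (by positivity)
    (GaussianFourier.integral_rexp_neg_mul_sq_norm ht)

theorem lintegral_rpow_mul_exp_neg_sq_norm_add_mul (c m : ℝ) {t : ℝ} (ht : 0 < t) :
    ∫⁻ q : V, ENNReal.ofReal (t ^ (c - 1) * exp (-((‖q‖ ^ 2 + m) * t))) =
      ENNReal.ofReal (π ^ (finrank ℝ V / 2 : ℝ)) *
        ENNReal.ofReal (t ^ (c - finrank ℝ V / 2 - 1) * exp (-(m * t))) := by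
  have hsplit (q : V) : t ^ (c - 1) * exp (-((‖q‖ ^ 2 + m) * t)) =
      t ^ (c - 1) * exp (-(m * t)) * exp (-t * ‖q‖ ^ 2) := by
    rw [mul_assoc, ← exp_add]
    ring_nf
  have hcoeff : 0 ≤ t ^ (c - 1) * exp (-(m * t)) := by positivity
  simp only [hsplit, ENNReal.ofReal_mul hcoeff]
  rw [lintegral_const_mul' _ _ ENNReal.ofReal_ne_top, lintegral_exp_neg_mul_sq_norm ht,
    ← ENNReal.ofReal_mul hcoeff, ← ENNReal.ofReal_mul (by positivity),
    div_rpow pi_nonneg ht.le, sub_right_comm, rpow_sub ht (c - 1)]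
  ring_nf

theorem lintegral_sq_norm_add_rpow_neg {c m : ℝ} (hc : (finrank ℝ V / 2 : ℝ) < c) (hm : 0 < m) :
    ∫⁻ q : V, ENNReal.ofReal ((‖q‖ ^ 2 + m) ^ (-c)) =
      ENNReal.ofReal (π ^ (finrank ℝ V / 2 : ℝ) * (Gamma (c - finrank ℝ V / 2) / Gamma c) *
        m ^ (finrank ℝ V / 2 - c)) := by
  have hc0 : 0 < c := lt_of_le_of_lt (by positivity) hc
  have hΓ := Gamma_pos_of_pos hc0
  have hswap : ENNReal.ofReal (Gamma c) * ∫⁻ q : V, ENNReal.ofReal ((‖q‖ ^ 2 + m) ^ (-c)) =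
      ENNReal.ofReal (π ^ (finrank ℝ V / 2 : ℝ) *
        (Gamma (c - finrank ℝ V / 2) * m ^ (-(c - finrank ℝ V / 2)))) := by
    calc
      _ = ∫⁻ q : V, ∫⁻ t in Ioi (0 : ℝ),
          ENNReal.ofReal (t ^ (c - 1) * exp (-((‖q‖ ^ 2 + m) * t))) := by
        rw [← lintegral_const_mul' _ _ ENNReal.ofReal_ne_top]
        refine lintegral_congr fun q => ?_
        rw [lintegral_rpow_mul_exp_neg_mul_Ioi hc0 (by positivity), ENNReal.ofReal_mul hΓ.le]
      _ = ∫⁻ t in Ioi (0 : ℝ), ∫⁻ q : V,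
          ENNReal.ofReal (t ^ (c - 1) * exp (-((‖q‖ ^ 2 + m) * t))) :=
        lintegral_lintegral_swap (Measurable.aemeasurable (by unfold Function.uncurry; fun_prop))
      _ = _ := by
        rw [setLIntegral_congr_fun measurableSet_Ioi
            fun t ht => lintegral_rpow_mul_exp_neg_sq_norm_add_mul c m ht,
          lintegral_const_mul' _ _ ENNReal.ofReal_ne_top,
          lintegral_rpow_mul_exp_neg_mul_Ioi (sub_pos.mpr hc) hm,
          ← ENNReal.ofReal_mul (by positivity)]
  rw [← ENNReal.mul_right_inj (ENNReal.ofReal_pos.mpr hΓ).ne' ENNReal.ofReal_ne_top, hswap,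
    ← ENNReal.ofReal_mul hΓ.le, neg_sub]
  congr 1
  field_simp

theorem lintegral_mul_sq_norm_sub_add_rpow_neg {c x : ℝ} (hc : (finrank ℝ V / 2 : ℝ) < c)
    (hx : x ∈ Ioo (0 : ℝ) 1) {p : V} (hp : p ≠ 0) :
    ∫⁻ q : V, ENNReal.ofReal ((x * ‖p - q‖ ^ 2 + (1 - x) * ‖q‖ ^ 2) ^ (-c)) =
      ENNReal.ofReal (π ^ (finrank ℝ V / 2 : ℝ) * (Gamma (c - finrank ℝ V / 2) / Gamma c) *
        (x * (1 - x) * ‖p‖ ^ 2) ^ (finrank ℝ V / 2 - c)) := by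
  have hm : 0 < x * (1 - x) * ‖p‖ ^ 2 :=
    mul_pos (mul_pos hx.1 (sub_pos.mpr hx.2)) (pow_pos (norm_pos_iff.mpr hp) 2)
  simp only [mul_sq_norm_sub_add_one_sub_mul_sq_norm]
  rw [lintegral_sub_right_eq_self (μ := volume)
    (fun q : V => ENNReal.ofReal ((‖q‖ ^ 2 + x * (1 - x) * ‖p‖ ^ 2) ^ (-c))),
    lintegral_sq_norm_add_rpow_neg hc hm]

theorem lintegral_lintegral_feynman_integrand {a b : ℝ} (ha : a < finrank ℝ V / 2)
    (hb : b < finrank ℝ V / 2) (hab : (finrank ℝ V / 2 : ℝ) < a + b) {p : V} (hp : p ≠ 0) :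
    ∫⁻ x in Ioo (0 : ℝ) 1, ∫⁻ q : V, ENNReal.ofReal
        (x ^ (a - 1) * (1 - x) ^ (b - 1) *
          (x * ‖p - q‖ ^ 2 + (1 - x) * ‖q‖ ^ 2) ^ (-(a + b))) =
      ENNReal.ofReal (π ^ (finrank ℝ V / 2 : ℝ) *
        (Gamma (a + b - finrank ℝ V / 2) / Gamma (a + b)) *
        (‖p‖ ^ 2) ^ (finrank ℝ V / 2 - (a + b)) *
        beta (finrank ℝ V / 2 - b) (finrank ℝ V / 2 - a)) := by
  set h : ℝ := finrank ℝ V / 2 with h_def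
  set K : ℝ := π ^ h * (Gamma (a + b - h) / Gamma (a + b)) * (‖p‖ ^ 2) ^ (h - (a + b)) with K_def
  have hK : 0 ≤ K := by
    have := Gamma_pos_of_pos (sub_pos.mpr hab)
    have := Gamma_pos_of_pos (show 0 < a + b by linarith)
    positivity
  rw [ENNReal.ofReal_mul hK,
    ← lintegral_rpow_mul_one_sub_rpow (sub_pos.mpr hb) (sub_pos.mpr ha),
    ← lintegral_const_mul' _ _ ENNReal.ofReal_ne_top]
  refine setLIntegral_congr_fun measurableSet_Ioo fun x hx => ?_
  have hx0 : 0 < x := hx.1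
  have hx1 : 0 < 1 - x := sub_pos.mpr hx.2
  have hweight : 0 ≤ x ^ (a - 1) * (1 - x) ^ (b - 1) := by positivity
  simp only [ENNReal.ofReal_mul hweight]
  rw [lintegral_const_mul' _ _ ENNReal.ofReal_ne_top,
    lintegral_mul_sq_norm_sub_add_rpow_neg hab hx hp, ← h_def, ← ENNReal.ofReal_mul hweight,
    ← ENNReal.ofReal_mul hK, mul_rpow (by positivity) (by positivity), mul_rpow hx0.le hx1.le,
    show h - b - 1 = (a - 1) + (h - (a + b)) by ring, rpow_add hx0,
    show h - a - 1 = (b - 1) + (h - (a + b)) by ring, rpow_add hx1, K_def]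
  ring_nf

theorem beta_mul_lintegral_norm_sub_rpow_mul_norm_rpow [Nontrivial V] {α β : ℝ} (hα : 0 < α)
    (hβ : 0 < β) (p : V) :
    ENNReal.ofReal (beta (α / 2) (β / 2)) *
        ∫⁻ q : V, ENNReal.ofReal (‖p - q‖ ^ (-α) * ‖q‖ ^ (-β)) =
      ∫⁻ x in Ioo (0 : ℝ) 1, ∫⁻ q : V, ENNReal.ofReal
        (x ^ (α / 2 - 1) * (1 - x) ^ (β / 2 - 1) *
          (x * ‖p - q‖ ^ 2 + (1 - x) * ‖q‖ ^ 2) ^ (-(α / 2 + β / 2))) := by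
  have hsq {u : ℝ} (hu : 0 ≤ u) (γ : ℝ) : (u ^ 2) ^ (-(γ / 2)) = u ^ (-γ) := by
    rw [← rpow_natCast_mul hu]
    push_cast
    ring_nf
  rw [← lintegral_const_mul' _ _ ENNReal.ofReal_ne_top, lintegral_lintegral_swap
    (Measurable.aemeasurable (by unfold Function.uncurry; fun_prop))]
  refine lintegral_congr_ae ?_
  filter_upwards [Measure.ae_ne volume 0, Measure.ae_ne volume p] with q hq0 hqp
  have hpq : 0 < ‖p - q‖ := norm_sub_pos_iff.mpr hqp.symm
  have hq : 0 < ‖q‖ := norm_pos_iff.mpr hq0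
  rw [lintegral_feynman_parametrization (half_pos hα) (half_pos hβ) (pow_pos hpq 2) (pow_pos hq 2),
    hsq hpq.le, hsq hq.le, ENNReal.ofReal_mul (beta_pos (half_pos hα) (half_pos hβ)).le]

theorem lintegral_norm_sub_rpow_mul_norm_rpow {α β : ℝ} (hα : α < finrank ℝ V)
    (hβ : β < finrank ℝ V) (hαβ : finrank ℝ V < α + β) {p : V} (hp : p ≠ 0) :
    ∫⁻ q : V, ENNReal.ofReal (‖p - q‖ ^ (-α) * ‖q‖ ^ (-β)) =
      ENNReal.ofReal (rieszCompositionConst (finrank ℝ V) α β *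
        ‖p‖ ^ (finrank ℝ V - α - β)) := by
  have : Nontrivial V := ⟨p, 0, hp⟩
  have hα0 : 0 < α := by linarith
  have hβ0 : 0 < β := by linarith
  have hβpos : 0 < beta (α / 2) (β / 2) := beta_pos (half_pos hα0) (half_pos hβ0)
  have hpow : (‖p‖ ^ 2) ^ ((finrank ℝ V : ℝ) / 2 - (α / 2 + β / 2)) =
      ‖p‖ ^ (finrank ℝ V - α - β) := by
    rw [← rpow_natCast_mul (norm_nonneg p)]
    push_cast
    ring_nf
  rw [← ENNReal.mul_right_inj (ENNReal.ofReal_pos.mpr hβpos).ne' ENNReal.ofReal_ne_top,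
    beta_mul_lintegral_norm_sub_rpow_mul_norm_rpow hα0 hβ0,
    lintegral_lintegral_feynman_integrand (by linarith) (by linarith) (by linarith) hp, hpow,
    ← ENNReal.ofReal_mul hβpos.le, rieszCompositionConst_eq_beta (add_pos hα0 hβ0)]
  congr 1
  field_simp

theorem stmt_3_general {α β : ℝ} (hα : α < finrank ℝ V) (hβ : β < finrank ℝ V)
    (hαβ : finrank ℝ V < α + β) {p : V} (hp : p ≠ 0) :
    ∫ q : V, ‖p - q‖ ^ (-α) * ‖q‖ ^ (-β) =
      rieszCompositionConst (finrank ℝ V) α β * ‖p‖ ^ (finrank ℝ V - α - β) := by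
  have hconst := rieszCompositionConst_nonneg hα hβ hαβ
  rw [integral_eq_lintegral_of_nonneg_ae (ae_of_all _ fun q => by positivity)
      (Measurable.aestronglyMeasurable (by fun_prop)),
    lintegral_norm_sub_rpow_mul_norm_rpow hα hβ hαβ hp, ENNReal.toReal_ofReal (by positivity)]

end RieszComposition

theorem stmt_3 (p : EuclideanSpace ℝ (Fin 3)) (hp : p ≠ 0) :
    ∫ p' : EuclideanSpace ℝ (Fin 3), ‖p - p'‖ ^ (-2 : ℝ) * ‖p'‖ ^ (-(3 : ℝ) / 2) =
      4 * Real.pi ^ 2 * ‖p‖ ^ (-(1 : ℝ) / 2) := by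
  convert stmt_3_general (α := 2) (β := 3 / 2) (by norm_num) (by norm_num) (by norm_num) hp using 3
    <;> norm_num [rieszCompositionConst_three_two_three_halves]
end

section
/- For every nonzero p ∈ ℝ³, ∫_{ℝ³} |p − p'|⁻² |p'|^{−5/2} dp' = 4π² |p|^{−3/2}. -/
open MeasureTheory

/-!
With the Riesz kernel `k_α(x) = c_α ‖x‖ ^ (α - n)` on an `n`-dimensional Euclidean space, the
integral is, up to constants, a value of `k_α ∗ k_β`. Subordination writes
`k_α = ∫₀^∞ t ^ (α / 2 - 1) / Γ(α / 2) * H_t dt` as a mixture of heat kernels `H_t`. As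
`H_s ∗ H_t = H_{s + t}`, and the weights `t ^ (a - 1) / Γ(a)` also form a semigroup under
convolution (Euler's beta integral), Tonelli gives `k_α ∗ k_β = k_{α + β}`. The constant comes from
`α = 1`, `β = 1 / 2`, `n = 3`.
-/

open Module ProbabilityTheory Set
open scoped ENNReal Real

section Lintegral

theorem lintegral_ofReal_eq_ofReal_integral {X : Type*} [MeasurableSpace X] {μ : Measure X}
    {f : X → ℝ} (hf : 0 ≤ᵐ[μ] f) (hne : ∫ x, f x ∂μ ≠ 0) :
    ∫⁻ x, ENNReal.ofReal (f x) ∂μ = ENNReal.ofReal (∫ x, f x ∂μ) :=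
  (ofReal_integral_eq_lintegral_ofReal (.of_integral_ne_zero hne) hf).symm

theorem lintegral_comp_smul {E : Type*} [NormedAddCommGroup E] [NormedSpace ℝ E]
    [FiniteDimensional ℝ E] [MeasurableSpace E] [BorelSpace E] (μ : Measure E)
    [μ.IsAddHaarMeasure] (f : E → ℝ≥0∞) {r : ℝ} (hr : r ≠ 0) :
    ∫⁻ x, f (r • x) ∂μ = ENNReal.ofReal |(r ^ finrank ℝ E)⁻¹| * ∫⁻ x, f x ∂μ := by
  rw [← smul_eq_mul, ← lintegral_smul_measure, ← μ.map_addHaar_smul hr]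
  exact (lintegral_map_equiv f (MeasurableEquiv.smul₀ r hr)).symm

theorem lintegral_lintegral_mul_comp_add {G : Type*} [AddGroup G] [MeasurableSpace G]
    [MeasurableAdd₂ G] [MeasurableNeg G] {μ : Measure G} [SFinite μ] [μ.IsAddLeftInvariant]
    {f g F : G → ℝ≥0∞} (hf : Measurable f) (hg : Measurable g) (hF : Measurable F) :
    ∫⁻ s, ∫⁻ t, f s * g t * F (s + t) ∂μ ∂μ = ∫⁻ r, (f ⋆ₗ[μ] g) r * F r ∂μ := by
  calc
    _ = ∫⁻ s, ∫⁻ r, f s * g (-s + r) * F r ∂μ ∂μ := by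
      refine lintegral_congr fun s => ?_
      simpa using lintegral_add_left_eq_self (μ := μ) (fun r => f s * g (-s + r) * F r) s
    _ = ∫⁻ r, ∫⁻ s, f s * g (-s + r) * F r ∂μ ∂μ := lintegral_lintegral_swap (by fun_prop)
    _ = _ := lintegral_congr fun r => lintegral_mul_const _ (by fun_prop)

theorem lconvolution_lintegral_mul {G S T : Type*} [Add G] [Neg G] [MeasurableSpace G]
    [MeasurableAdd₂ G] [MeasurableNeg G] [MeasurableSpace S] [MeasurableSpace T] {ρ : Measure G}
    {μ : Measure S} {ν : Measure T} [SFinite ρ] [SFinite μ] [SFinite ν]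
    {f : S → ℝ≥0∞} {g : T → ℝ≥0∞} {F : S → G → ℝ≥0∞} {H : T → G → ℝ≥0∞}
    (hf : Measurable f) (hg : Measurable g) (hF : Measurable (Function.uncurry F))
    (hH : Measurable (Function.uncurry H)) (x : G) :
    ((fun y => ∫⁻ s, f s * F s y ∂μ) ⋆ₗ[ρ] fun y => ∫⁻ t, g t * H t y ∂ν) x =
      ∫⁻ s, ∫⁻ t, f s * g t * (F s ⋆ₗ[ρ] H t) x ∂ν ∂μ := by
  have hmeas : Measurable fun z : (G × S) × T =>
      f z.1.2 * F z.1.2 z.1.1 * (g z.2 * H z.2 (-z.1.1 + x)) := by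
    fun_prop
  calc
    _ = ∫⁻ y, ∫⁻ s, ∫⁻ t, f s * F s y * (g t * H t (-y + x)) ∂ν ∂μ ∂ρ :=
      lintegral_congr fun y => (lintegral_lintegral_mul (by fun_prop) (by fun_prop)).symm
    _ = ∫⁻ s, ∫⁻ y, ∫⁻ t, f s * F s y * (g t * H t (-y + x)) ∂ν ∂ρ ∂μ :=
      lintegral_lintegral_swap hmeas.lintegral_prod_right'.aemeasurable
    _ = ∫⁻ s, ∫⁻ t, ∫⁻ y, f s * F s y * (g t * H t (-y + x)) ∂ρ ∂ν ∂μ :=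
      lintegral_congr fun s => lintegral_lintegral_swap (by fun_prop)
    _ = _ := by
      refine lintegral_congr fun s => lintegral_congr fun t => ?_
      rw [lconvolution_def, ← lintegral_const_mul _ (by fun_prop)]
      simp only [mul_mul_mul_comm]

end Lintegral

section GammaIntegral

theorem lintegral_rpow_mul_exp_neg_div_Ioi {c r : ℝ} (hc : 0 < c) (hr : 0 < r) :
    ∫⁻ t in Ioi (0 : ℝ), ENNReal.ofReal (t ^ (-c - 1) * Real.exp (-(r / t))) =
      ENNReal.ofReal (r ^ (-c) * Real.Gamma c) := by
  have hintegral : ∫ t in Ioi (0 : ℝ), t ^ (-c - 1) * Real.exp (-(r / t)) =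
      r ^ (-c) * Real.Gamma c := by
    have hinv := integral_comp_rpow_Ioi (fun u : ℝ => u ^ (c - 1) * Real.exp (-(r * u)))
      (by norm_num : (-1 : ℝ) ≠ 0)
    rw [Real.integral_rpow_mul_exp_neg_mul_Ioi hc hr, one_div, Real.inv_rpow hr.le,
      ← Real.rpow_neg hr.le] at hinv
    rw [← hinv]
    refine setIntegral_congr_fun measurableSet_Ioi fun t (ht : 0 < t) => ?_
    rw [← Real.rpow_mul ht.le, Real.rpow_neg_one, abs_neg, abs_one, one_mul, smul_eq_mul,
      ← mul_assoc, ← Real.rpow_add ht, div_eq_mul_inv]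
    ring_nf
  rw [lintegral_ofReal_eq_ofReal_integral _ (by rw [hintegral]; positivity), hintegral]
  exact ae_restrict_of_forall_mem measurableSet_Ioi fun t (ht : 0 < t) => by positivity

end GammaIntegral

section FractionalKernel

/-- The kernel `t ↦ t ^ (a - 1) / Γ(a)` of the Riemann–Liouville fractional integral of order `a`,
extended by zero to `t ≤ 0`. -/
noncomputable def fractionalKernel (a : ℝ) : ℝ → ℝ≥0∞ :=
  (Ioi 0).indicator fun t => ENNReal.ofReal (t ^ (a - 1) / Real.Gamma a)

variable {a b : ℝ}

theorem fractionalKernel_of_pos {t : ℝ} (ht : 0 < t) :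
    fractionalKernel a t = ENNReal.ofReal (t ^ (a - 1) / Real.Gamma a) :=
  indicator_of_mem (mem_Ioi.2 ht) _

theorem fractionalKernel_of_nonpos {t : ℝ} (ht : t ≤ 0) : fractionalKernel a t = 0 :=
  indicator_of_notMem (notMem_Ioi.2 ht) _

@[fun_prop]
theorem measurable_fractionalKernel : Measurable (fractionalKernel a) :=
  Measurable.indicator (by fun_prop) measurableSet_Ioi

theorem lintegral_fractionalKernel_mul (F : ℝ → ℝ≥0∞) :
    ∫⁻ t, fractionalKernel a t * F t =
      ∫⁻ t in Ioi 0, ENNReal.ofReal (t ^ (a - 1) / Real.Gamma a) * F t := by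
  rw [← lintegral_indicator measurableSet_Ioi]
  simp only [fractionalKernel, indicator_mul_left]

theorem fractionalKernel_mul_fractionalKernel_of_pos_of_lt (ha : 0 < a) (hb : 0 < b) {r t : ℝ}
    (ht : 0 < t) (htr : t < r) :
    fractionalKernel a t * fractionalKernel b (-t + r) =
      fractionalKernel (a + b) r * (ENNReal.ofReal r⁻¹ * betaPDF a b (r⁻¹ * t)) := by
  have hr : 0 < r := ht.trans htr
  have hrt : 0 < r - t := sub_pos.2 htr
  have hlt : r⁻¹ * t < 1 := by rwa [← div_eq_inv_mul, div_lt_one hr]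
  have hsub : 1 - r⁻¹ * t = r⁻¹ * (r - t) := by field_simp
  have hpow : r ^ (a + b - 1) = r ^ (a - 1) * r ^ (b - 1) * r := by
    rw [← Real.rpow_add hr, ← Real.rpow_add_one hr.ne']
    ring_nf
  rw [neg_add_eq_sub, fractionalKernel_of_pos ht, fractionalKernel_of_pos hrt,
    fractionalKernel_of_pos hr, betaPDF_of_pos_lt_one (by positivity) hlt, hsub,
    Real.mul_rpow (by positivity) ht.le, Real.mul_rpow (by positivity) hrt.le,
    Real.inv_rpow hr.le, Real.inv_rpow hr.le, hpow, beta,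
    ← ENNReal.ofReal_mul (by positivity), ← ENNReal.ofReal_mul (by positivity),
    ← ENNReal.ofReal_mul (by positivity)]
  congr 1
  field_simp

theorem fractionalKernel_mul_fractionalKernel (ha : 0 < a) (hb : 0 < b) (r t : ℝ) :
    fractionalKernel a t * fractionalKernel b (-t + r) =
      fractionalKernel (a + b) r * (ENNReal.ofReal r⁻¹ * betaPDF a b (r⁻¹ * t)) := by
  rcases le_or_gt t 0 with ht | ht
  · rcases le_or_gt r 0 with hr | hr
    · simp [fractionalKernel_of_nonpos, ht, hr]
    · have : r⁻¹ * t ≤ 0 := mul_nonpos_of_nonneg_of_nonpos (by positivity) ht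
      simp [fractionalKernel_of_nonpos, betaPDF_eq_zero_of_nonpos, ht, this]
  rcases le_or_gt r t with hrt | htr
  · rw [fractionalKernel_of_nonpos (by linarith : -t + r ≤ 0), mul_zero]
    rcases le_or_gt r 0 with hr | hr
    · rw [fractionalKernel_of_nonpos hr, zero_mul]
    · rw [betaPDF_eq_zero_of_one_le (by rwa [← div_eq_inv_mul, one_le_div hr]), mul_zero, mul_zero]
  exact fractionalKernel_mul_fractionalKernel_of_pos_of_lt ha hb ht htr

theorem fractionalKernel_lconvolution_fractionalKernel (ha : 0 < a) (hb : 0 < b) :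
    fractionalKernel a ⋆ₗ fractionalKernel b = fractionalKernel (a + b) := by
  ext r
  simp only [lconvolution_def, fractionalKernel_mul_fractionalKernel ha hb]
  rcases le_or_gt r 0 with hr | hr
  · simp [fractionalKernel_of_nonpos hr]
  have hscale : ∫⁻ t, betaPDF a b (r⁻¹ * t) = ENNReal.ofReal r := by
    simpa [lintegral_betaPDF_eq_one ha hb, abs_of_pos hr] using
      lintegral_comp_smul volume (betaPDF a b) (inv_ne_zero hr.ne')
  have hmeas : Measurable (betaPDF a b) := (measurable_betaPDFReal a b).ennreal_ofReal
  rw [lintegral_const_mul _ (by fun_prop), lintegral_const_mul _ (by fun_prop), hscale,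
    ← ENNReal.ofReal_mul (by positivity), inv_mul_cancel₀ hr.ne', ENNReal.ofReal_one, mul_one]

end FractionalKernel

section HeatKernel

variable {V : Type*} [NormedAddCommGroup V] [InnerProductSpace ℝ V]

/-- The density `(4πt) ^ (-n / 2) * exp (-‖x‖² / (4t))` of the heat kernel at time `t > 0` on an
`n`-dimensional Euclidean space. -/
noncomputable def heatKernel (t : ℝ) (x : V) : ℝ≥0∞ :=
  ENNReal.ofReal ((4 * π * t) ^ (-(finrank ℝ V / 2 : ℝ)) * Real.exp (-(‖x‖ ^ 2 / (4 * t))))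

-- Brownian bridge: given its position `x` at time `s + t`, a Brownian path is Gaussian at time `s`.
theorem heatKernel_mul_heatKernel {s t : ℝ} (hs : 0 < s) (ht : 0 < t) (x y : V) :
    heatKernel s y * heatKernel t (-y + x) =
      heatKernel (s + t) x * heatKernel (s * t / (s + t)) (y - (s / (s + t)) • x) := by
  have hexponent : -(‖y‖ ^ 2 / (4 * s)) + -(‖-y + x‖ ^ 2 / (4 * t)) = -(‖x‖ ^ 2 / (4 * (s + t))) +
      -(‖y - (s / (s + t)) • x‖ ^ 2 / (4 * (s * t / (s + t)))) := by
    rw [neg_add_eq_sub y x, norm_sub_sq_real, norm_sub_sq_real, inner_smul_right, norm_smul,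
      Real.norm_of_nonneg (by positivity), real_inner_comm]
    field_simp
    ring
  have hbase : 4 * π * s * (4 * π * t) = 4 * π * (s + t) * (4 * π * (s * t / (s + t))) := by
    field_simp
  simp only [heatKernel]
  rw [← ENNReal.ofReal_mul (by positivity), ← ENNReal.ofReal_mul (by positivity),
    mul_mul_mul_comm, mul_mul_mul_comm ((4 * π * (s + t)) ^ _), ← Real.exp_add, ← Real.exp_add,
    ← Real.mul_rpow (by positivity) (by positivity),
    ← Real.mul_rpow (by positivity) (by positivity), hexponent, hbase]

variable [MeasurableSpace V] [BorelSpace V]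

@[fun_prop]
theorem measurable_heatKernel {X : Type*} [MeasurableSpace X] {τ : X → ℝ} {ξ : X → V}
    (hτ : Measurable τ) (hξ : Measurable ξ) : Measurable fun x => heatKernel (τ x) (ξ x) := by
  unfold heatKernel
  fun_prop

variable [FiniteDimensional ℝ V]

theorem lintegral_heatKernel {t : ℝ} (ht : 0 < t) : ∫⁻ x : V, heatKernel t x = 1 := by
  have hgauss : ∫ x : V, Real.exp (-(‖x‖ ^ 2 / (4 * t))) =
      (4 * π * t) ^ (finrank ℝ V / 2 : ℝ) := by
    have h := GaussianFourier.integral_rexp_neg_mul_sq_norm (V := V)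
      (by positivity : 0 < (4 * t)⁻¹)
    rw [div_inv_eq_mul, ← mul_assoc, mul_comm π 4] at h
    simpa only [neg_mul, inv_mul_eq_div] using h
  have hnonneg : 0 ≤ (4 * π * t) ^ (-(finrank ℝ V / 2 : ℝ)) := by positivity
  simp only [heatKernel, ENNReal.ofReal_mul hnonneg]
  rw [lintegral_const_mul _ (by fun_prop), lintegral_ofReal_eq_ofReal_integral
      (.of_forall fun x => (Real.exp_pos _).le) (by rw [hgauss]; positivity), hgauss,
    ← ENNReal.ofReal_mul hnonneg, ← Real.rpow_add (by positivity), neg_add_cancel,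
    Real.rpow_zero, ENNReal.ofReal_one]

theorem heatKernel_lconvolution_heatKernel {s t : ℝ} (hs : 0 < s) (ht : 0 < t) :
    (heatKernel s : V → ℝ≥0∞) ⋆ₗ heatKernel t = heatKernel (s + t) := by
  ext x
  simp only [lconvolution_def, heatKernel_mul_heatKernel hs ht]
  rw [lintegral_const_mul _ (by fun_prop), lintegral_sub_right_eq_self,
    lintegral_heatKernel (by positivity), mul_one]

end HeatKernel

section RieszConst

/-- The normalizing constant of the Riesz kernel of order `α` in dimension `n`. -/
noncomputable def rieszConst (n α : ℝ) : ℝ :=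
  Real.Gamma ((n - α) / 2) / (2 ^ α * π ^ (n / 2) * Real.Gamma (α / 2))

theorem rieszConst_pos {n α : ℝ} (hα : 0 < α) (hαn : α < n) : 0 < rieszConst n α := by
  have : 0 < Real.Gamma ((n - α) / 2) := Real.Gamma_pos_of_pos (by linarith)
  unfold rieszConst
  positivity

theorem rieszConst_add_div_rieszConst_mul_rieszConst {n α β : ℝ} (hα : 0 < α) (hβ : 0 < β)
    (hαβ : α + β < n) :
    rieszConst n (α + β) / (rieszConst n α * rieszConst n β) =
      π ^ (n / 2) * (Real.Gamma (α / 2) * Real.Gamma (β / 2) * Real.Gamma ((n - (α + β)) / 2) /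
        (Real.Gamma ((n - α) / 2) * Real.Gamma ((n - β) / 2) * Real.Gamma ((α + β) / 2))) := by
  have hΓα : 0 < Real.Gamma ((n - α) / 2) := Real.Gamma_pos_of_pos (by linarith)
  have hΓβ : 0 < Real.Gamma ((n - β) / 2) := Real.Gamma_pos_of_pos (by linarith)
  simp only [rieszConst, Real.rpow_add two_pos α β]
  field_simp

end RieszConst

section RieszKernel

variable {V : Type*} [NormedAddCommGroup V] [InnerProductSpace ℝ V]

/-- The Riesz kernel of order `α`, the integral kernel of `(-Δ) ^ (-α / 2)` on a Euclidean space.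
For `α < n` its singularity at the origin is replaced by the junk value `0`. -/
noncomputable def rieszKernel (α : ℝ) (x : V) : ℝ≥0∞ :=
  ENNReal.ofReal (rieszConst (finrank ℝ V) α * ‖x‖ ^ (α - finrank ℝ V))

theorem lintegral_fractionalKernel_mul_heatKernel {α : ℝ} (hα : 0 < α) (hαn : α < finrank ℝ V)
    {x : V} (hx : x ≠ 0) :
    ∫⁻ t, fractionalKernel (α / 2) t * heatKernel t x = rieszKernel α x := by
  set n : ℝ := (finrank ℝ V : ℝ) with hn
  have hx' : 0 < ‖x‖ := norm_pos_iff.2 hx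
  have hintegrand : ∀ t ∈ Ioi (0 : ℝ),
      ENNReal.ofReal (t ^ (α / 2 - 1) / Real.Gamma (α / 2)) * heatKernel t x =
        ENNReal.ofReal ((4 * π) ^ (-(n / 2)) / Real.Gamma (α / 2)) *
          ENNReal.ofReal (t ^ (-((n - α) / 2) - 1) * Real.exp (-(‖x‖ ^ 2 / 4 / t))) := by
    intro t (ht : 0 < t)
    have hpow : t ^ (-((n - α) / 2) - 1) = t ^ (α / 2 - 1) * t ^ (-(n / 2)) := by
      rw [← Real.rpow_add ht]
      ring_nf
    rw [heatKernel, ← hn, ← ENNReal.ofReal_mul (by positivity),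
      ← ENNReal.ofReal_mul (by positivity), Real.mul_rpow (by positivity) ht.le, hpow, div_div]
    ring_nf
  have hfour : (4 : ℝ) ^ (-(n / 2)) = 4 ^ (-((n - α) / 2)) * (2 ^ α)⁻¹ := by
    rw [← Real.rpow_neg two_pos.le, (by norm_num : (4 : ℝ) = 2 ^ (2 : ℝ)),
      ← Real.rpow_mul two_pos.le, ← Real.rpow_mul two_pos.le, ← Real.rpow_add two_pos]
    ring_nf
  have hnorm : (‖x‖ ^ 2) ^ (-((n - α) / 2)) = ‖x‖ ^ (α - n) := by
    rw [← Real.rpow_two, ← Real.rpow_mul hx'.le]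
    ring_nf
  rw [lintegral_fractionalKernel_mul, setLIntegral_congr_fun measurableSet_Ioi hintegrand,
    lintegral_const_mul _ (by fun_prop),
    lintegral_rpow_mul_exp_neg_div_Ioi (by linarith) (by positivity), rieszKernel, rieszConst, ← hn,
    ← ENNReal.ofReal_mul (by positivity), Real.mul_rpow (by positivity) (by positivity), hfour,
    Real.div_rpow (by positivity) (by positivity), hnorm, Real.rpow_neg Real.pi_pos.le]
  congr 1
  field_simp

variable [MeasurableSpace V] [BorelSpace V] [FiniteDimensional ℝ V]

theorem rieszKernel_lconvolution_rieszKernel {α β : ℝ} (hα : 0 < α) (hβ : 0 < β)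
    (hαβ : α + β < finrank ℝ V) {x : V} (hx : x ≠ 0) :
    (rieszKernel α ⋆ₗ rieszKernel β) x = rieszKernel (α + β) x := by
  have : Nontrivial V := ⟨x, 0, hx⟩
  calc
    _ = ((fun y : V => ∫⁻ s, fractionalKernel (α / 2) s * heatKernel s y) ⋆ₗ
          fun y => ∫⁻ t, fractionalKernel (β / 2) t * heatKernel t y) x := by
      refine lintegral_congr_ae ?_
      filter_upwards [Measure.ae_ne volume 0, Measure.ae_ne volume x] with y hy hyx
      rw [lintegral_fractionalKernel_mul_heatKernel hα (by linarith) hy,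
        lintegral_fractionalKernel_mul_heatKernel hβ (by linarith)
          (by rwa [neg_add_eq_sub, sub_ne_zero, ne_comm])]
    _ = ∫⁻ s, ∫⁻ t, fractionalKernel (α / 2) s * fractionalKernel (β / 2) t *
          ((heatKernel s : V → ℝ≥0∞) ⋆ₗ heatKernel t) x :=
      lconvolution_lintegral_mul (by fun_prop) (by fun_prop)
        (measurable_heatKernel measurable_fst measurable_snd)
        (measurable_heatKernel measurable_fst measurable_snd) x
    _ = ∫⁻ s, ∫⁻ t, fractionalKernel (α / 2) s * fractionalKernel (β / 2) t *
          heatKernel (s + t) x := by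
      refine lintegral_congr fun s => lintegral_congr fun t => ?_
      rcases le_or_gt s 0 with hs | hs
      · simp only [fractionalKernel_of_nonpos hs, zero_mul]
      rcases le_or_gt t 0 with ht | ht
      · simp only [fractionalKernel_of_nonpos ht, mul_zero, zero_mul]
      rw [heatKernel_lconvolution_heatKernel hs ht]
    _ = ∫⁻ r, fractionalKernel ((α + β) / 2) r * heatKernel r x := by
      rw [lintegral_lintegral_mul_comp_add (F := fun r => heatKernel r x) (by fun_prop)
          (by fun_prop) (by fun_prop),
        fractionalKernel_lconvolution_fractionalKernel (half_pos hα) (half_pos hβ), add_div]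
    _ = rieszKernel (α + β) x :=
      lintegral_fractionalKernel_mul_heatKernel (add_pos hα hβ) hαβ hx

theorem rieszConst_mul_rieszConst_mul_integral {α β : ℝ} (hα : 0 < α) (hβ : 0 < β)
    (hαβ : α + β < finrank ℝ V) {p : V} (hp : p ≠ 0) :
    rieszConst (finrank ℝ V) α * rieszConst (finrank ℝ V) β *
        ∫ y : V, ‖p - y‖ ^ (α - finrank ℝ V) * ‖y‖ ^ (β - finrank ℝ V) =
      rieszConst (finrank ℝ V) (α + β) * ‖p‖ ^ (α + β - finrank ℝ V) := by
  have hcα := rieszConst_pos hα (by linarith : α < finrank ℝ V)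
  have hcβ := rieszConst_pos hβ (by linarith : β < finrank ℝ V)
  have hc := rieszConst_pos (add_pos hα hβ) hαβ
  calc
    _ = ∫ y : V, (rieszKernel β y * rieszKernel α (-y + p)).toReal := by
      rw [← integral_const_mul]
      refine integral_congr_ae (.of_forall fun y => ?_)
      simp only [rieszKernel, ENNReal.toReal_mul, neg_add_eq_sub]
      rw [ENNReal.toReal_ofReal (by positivity), ENNReal.toReal_ofReal (by positivity)]
      ring
    _ = ((rieszKernel β ⋆ₗ rieszKernel α) p).toReal := by
      unfold rieszKernel
      exact integral_toReal (by fun_prop)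
        (.of_forall fun y => ENNReal.mul_lt_top ENNReal.ofReal_lt_top ENNReal.ofReal_lt_top)
    _ = _ := by
      rw [rieszKernel_lconvolution_rieszKernel hβ hα (by linarith) hp, rieszKernel, add_comm,
        ENNReal.toReal_ofReal (by positivity)]

theorem stmt_4_general {α β : ℝ} (hα : 0 < α) (hβ : 0 < β) (hαβ : α + β < finrank ℝ V)
    {p : V} (hp : p ≠ 0) :
    ∫ y : V, ‖p - y‖ ^ (α - finrank ℝ V) * ‖y‖ ^ (β - finrank ℝ V) =
      π ^ (finrank ℝ V / 2 : ℝ) *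
        (Real.Gamma (α / 2) * Real.Gamma (β / 2) * Real.Gamma ((finrank ℝ V - (α + β)) / 2) /
          (Real.Gamma ((finrank ℝ V - α) / 2) * Real.Gamma ((finrank ℝ V - β) / 2) *
            Real.Gamma ((α + β) / 2))) * ‖p‖ ^ (α + β - finrank ℝ V) := by
  have hcα := rieszConst_pos hα (by linarith : α < finrank ℝ V)
  have hcβ := rieszConst_pos hβ (by linarith : β < finrank ℝ V)
  rw [← rieszConst_add_div_rieszConst_mul_rieszConst hα hβ hαβ, div_mul_eq_mul_div,
    eq_div_iff (mul_pos hcα hcβ).ne', mul_comm, rieszConst_mul_rieszConst_mul_integral hα hβ hαβ hp]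

end RieszKernel

theorem pi_rpow_mul_Gamma_div_Gamma_eq_four_mul_pi_sq :
    π ^ (3 / 2 : ℝ) * (Real.Gamma (1 / 2) * Real.Gamma (1 / 4) * Real.Gamma (3 / 4) /
      (Real.Gamma 1 * Real.Gamma (5 / 4) * Real.Gamma (3 / 4))) = 4 * π ^ 2 := by
  have hΓ : Real.Gamma (5 / 4) = 1 / 4 * Real.Gamma (1 / 4) := by
    rw [← Real.Gamma_add_one (by norm_num)]
    norm_num
  have hpi : π ^ (3 / 2 : ℝ) * √π = π ^ 2 := by
    rw [Real.sqrt_eq_rpow, ← Real.rpow_add Real.pi_pos, ← Real.rpow_two]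
    norm_num
  rw [Real.Gamma_one_half_eq, Real.Gamma_one, hΓ, ← hpi]
  field_simp

theorem stmt_4 (p : EuclideanSpace ℝ (Fin 3)) (hp : p ≠ 0) :
    ∫ p' : EuclideanSpace ℝ (Fin 3), ‖p - p'‖ ^ (-2 : ℝ) * ‖p'‖ ^ (-(5 : ℝ) / 2) =
      4 * Real.pi ^ 2 * ‖p‖ ^ (-(3 : ℝ) / 2) := by
  rw [← pi_rpow_mul_Gamma_div_Gamma_eq_four_mul_pi_sq]
  convert stmt_4_general one_pos one_half_pos (by norm_num) hp using 6 <;> norm_num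
end
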